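/- arXiv:2404.06308 — 2 statements merged into one kernel-verified Lean document; each statement's English description precedes it below -/
import Mathlib

section
/- Let w be a group-word in n variables and set v = [w(x_1,...,x_n), x_{n+1}], the commutator of w with one fresh variable. If w is (1/(m+1))-concise for some m ∈ ℕ, then v is (1/(m+1))-concise. -/
/-- The set of `w`-values in `G`: images of the word `w` (an element of the free
group on `n` generators) under all homomorphisms `FreeGroup (Fin n) →* G`. -/
def wValues {n : ℕ} (w : FreeGroup (Fin n)) (G : Type*) [Group G] : Set G :=
  Set.range fun g : Fin n → G => FreeGroup.lift g w

/-- `G_w^* = G_w ∪ G_w⁻¹`. -/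
def wValuesStar {n : ℕ} (w : FreeGroup (Fin n)) (G : Type*) [Group G] : Set G :=
  wValues w G ∪ (wValues w G)⁻¹

/-- The verbal subgroup `w(G)` generated by all `w`-values. -/
def verbalSubgroup {n : ℕ} (w : FreeGroup (Fin n)) (G : Type*) [Group G] : Subgroup G :=
  Subgroup.closure (wValues w G)

/-- The iterated commutator subgroup `[H, G, ..., G]` with `G` repeated `k` times. -/
def iterCommSub (G : Type*) [Group G] (H : Subgroup G) : ℕ → Subgroup G
  | 0 => H
  | k + 1 => ⁅iterCommSub G H k, (⊤ : Subgroup G)⁆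

/-- The set of conjugates `x^S = {g⁻¹ x g : g ∈ S}`. -/
def conjSet {G : Type*} [Group G] (x : G) (S : Set G) : Set G :=
  (fun g => g⁻¹ * x * g) '' S

/-- `G` is an `FC(w)`-group: every conjugacy set `x^{G_w}` is finite. -/
def IsFCw {n : ℕ} (w : FreeGroup (Fin n)) (G : Type*) [Group G] : Prop :=
  ∀ x : G, (conjSet x (wValues w G)).Finite

/-- `G` is a `BFC(w)`-group: the sets `x^{G_w}` are finite of bounded size. -/
def IsBFCw {n : ℕ} (w : FreeGroup (Fin n)) (G : Type*) [Group G] : Prop :=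
  ∃ c : ℕ, ∀ x : G,
    (conjSet x (wValues w G)).Finite ∧ (conjSet x (wValues w G)).ncard ≤ c

/-- A subgroup `H` is `FC`-embedded in `G` if `x^H` is finite for every `x ∈ G`. -/
def IsFCEmbedded {G : Type*} [Group G] (H : Subgroup G) : Prop :=
  ∀ x : G, (conjSet x (H : Set G)).Finite

/-- A subgroup `H` is `BFC`-embedded in `G` if the sets `x^H` are finite of bounded size. -/
def IsBFCEmbedded {G : Type*} [Group G] (H : Subgroup G) : Prop :=
  ∃ d : ℕ, ∀ x : G,
    (conjSet x (H : Set G)).Finite ∧ (conjSet x (H : Set G)).ncard ≤ d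

/-- A word `w` is `(1/k)`-concise (`k ≥ 1`): in every group `G` with `G_w` finite,
the subgroup `[w(G), G, ..., G]` (with `G` repeated `k - 1` times) is finite. -/
def IsFracConcise {n : ℕ} (w : FreeGroup (Fin n)) (k : ℕ) : Prop :=
  ∀ (G : Type*) [Group G], (wValues w G).Finite →
    ((iterCommSub G (verbalSubgroup w G) (k - 1) : Subgroup G) : Set G).Finite

/-- A word `w` is `0`-concise: in every group `G` with `G_w` finite, some iterated
commutator subgroup `[w(G), G, ..., G]` is finite. -/
def IsZeroConcise {n : ℕ} (w : FreeGroup (Fin n)) : Prop :=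
  ∀ (G : Type*) [Group G], (wValues w G).Finite →
    ∃ k : ℕ, ((iterCommSub G (verbalSubgroup w G) k : Subgroup G) : Set G).Finite

/-- The commutator `[a, b] = a⁻¹ b⁻¹ a b`. -/
def pcomm {G : Type*} [Group G] (a b : G) : G := a⁻¹ * b⁻¹ * a * b

/-- The word `w(x_1, ..., x_n)` viewed in the free group on `n + m` generators. -/
def extendWord {n : ℕ} (m : ℕ) (w : FreeGroup (Fin n)) : FreeGroup (Fin (n + m)) :=
  FreeGroup.map (Fin.castAdd m) w

/-- The word `v = [w(x_1, ..., x_n), x_{n+1}, ..., x_{n+m}]`. -/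
def commWord {n : ℕ} (m : ℕ) (w : FreeGroup (Fin n)) : FreeGroup (Fin (n + m)) :=
  (List.ofFn fun i : Fin m => FreeGroup.of (Fin.natAdd n i)).foldl pcomm (extendWord m w)

/-- The iterated commutator `[y, b, ..., b]` with `b` repeated `k` times. -/
def iterPcomm {G : Type*} [Group G] (y b : G) : ℕ → G
  | 0 => y
  | k + 1 => pcomm (iterPcomm y b k) b

/-!
Write `V` for the set of values of `v = [w, x_{n+1}]`, i.e. of commutators of `w`-values with
arbitrary elements, and suppose `V` is finite. Its centralizer `C` has finite index, and the
commutators of elements of `C` with `w`-values form a finite conjugation invariant set of torsion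
elements, so by Dietzmann's lemma they generate a finite normal subgroup. Modulo it, the
`w`-values have a centralizer of finite index. In that case a `w`-value is determined modulo the
center by its commutators with finitely many elements, so `w` takes finitely many values modulo the
center, and by hypothesis `K = [w(G), G, …, G]` is finite modulo the center. As the centralizer of
`K` has finite index too, a theorem of Baer shows that `[K, G]`, which contains `[v(G), G, …, G]`,
is finite.

The hypothesis on `w` and the conclusion on `v` speak about groups in two independent universes.
They are linked by countable subgroups, which have copies in every universe: if `[w(G), G, …, G]` is
infinite, then so is `[w(L), L, …, L]` for some countable `L ≤ G`.
-/

section GroupTheory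

open Subgroup
open scoped commutatorElement IsMulCommutative

variable {G : Type*} [Group G]

theorem finite_range_of_factorsThrough {α β γ : Type*} [Finite γ] {f : α → β} {g : α → γ}
    (h : f.FactorsThrough g) : (Set.range f).Finite := by
  cases isEmpty_or_nonempty α
  · simp only [Set.range_eq_empty, Set.finite_empty]
  · have : Nonempty β := Nonempty.map f ‹_›
    obtain ⟨e, rfl⟩ := (Function.factorsThrough_iff f).1 h
    exact (Set.finite_range e).subset (Set.range_comp_subset_range g e)

theorem finite_of_finite_map {G' : Type*} [Group G'] {H : Subgroup G} {f : G →* G'}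
    [Finite f.ker] [Finite (H.map f)] : Finite H := by
  refine (f.domRestrict H).finite_iff_finite_ker_range.2 ⟨?_, ?_⟩
  · rw [f.ker_domRestrict]
    exact Finite.of_injective (fun x : f.ker.subgroupOf H => (⟨x, x.2⟩ : f.ker))
      fun x y hxy => Subtype.ext (Subtype.ext (Subtype.mk.inj hxy))
  · rwa [f.domRestrict_range]

theorem finiteIndex_map_of_surjective {G' : Type*} [Group G'] {f : G →* G'}
    (hf : Function.Surjective f) (H : Subgroup G) [H.FiniteIndex] : (H.map f).FiniteIndex :=
  ⟨ne_zero_of_dvd_ne_zero FiniteIndex.index_ne_zero (H.index_map_dvd hf)⟩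

/-- A set is conjugation invariant if it is a union of conjugacy classes; the sets of word values
are the main example. -/
def IsConjInvariant (X : Set G) : Prop :=
  ∀ x ∈ X, ∀ g : G, g * x * g⁻¹ ∈ X

theorem isConjInvariant_univ : IsConjInvariant (Set.univ : Set G) :=
  fun _ _ _ => Set.mem_univ _

theorem IsConjInvariant.normal_closure {X : Set G} (hX : IsConjInvariant X) :
    (closure X).Normal :=
  normalizer_eq_top_iff.1 <| top_le_iff.1 <| le_normalizer_closure_iff.2
    fun g _ x hx => subset_closure (hX x hx g)

theorem IsConjInvariant.normal_centralizer {X : Set G} (hX : IsConjInvariant X) :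
    (centralizer X).Normal := by
  have := hX.normal_closure
  rw [← centralizer_closure]
  infer_instance

theorem finiteIndex_centralizer_singleton {x : G} (hx : (conjugatesOf x).Finite) :
    (centralizer {x}).FiniteIndex := by
  have horbit : MulAction.orbit (ConjAct G) x = conjugatesOf x :=
    Set.ext fun y => ConjAct.mem_orbit_conjAct.trans isConj_comm
  have hindex : (centralizer {x}).index = (conjugatesOf x).ncard := by
    rw [← horbit, ← MulAction.index_stabilizer, centralizer_eq_comap_stabilizer]
    exact index_comap_of_surjective _ ConjAct.toConjAct.surjective
  exact ⟨hindex ▸ ((Set.ncard_pos hx).2 ⟨x, mem_conjugatesOf_self⟩).ne'⟩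

theorem IsConjInvariant.finiteIndex_centralizer {X : Set G} (hX : IsConjInvariant X)
    (hfin : X.Finite) : (centralizer X).FiniteIndex := by
  have : Finite X := hfin
  rw [centralizer_eq_iInf, iInf_subtype']
  refine finiteIndex_iInf fun x => finiteIndex_centralizer_singleton (hfin.subset fun y hy => ?_)
  obtain ⟨g, rfl⟩ := isConj_iff.1 hy
  exact hX x x.2 g

theorem mul_pow_index_of_le_center {H : Subgroup G} [H.FiniteIndex] (hH : H ≤ center G)
    (x y : G) : (x * y) ^ H.index = x ^ H.index * y ^ H.index := by
  have : (center G).FiniteIndex := finiteIndex_of_le hH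
  obtain ⟨k, hk⟩ := index_dvd_of_le hH
  simp only [hk, pow_mul]
  exact congrArg Subtype.val (map_mul ((powMonoidHom k).comp (MonoidHom.transferCenterPow G)) x y)

theorem isOfFinOrder_mul_of_finiteIndex_center [(center G).FiniteIndex] {x y : G}
    (hx : IsOfFinOrder x) (hy : IsOfFinOrder y) : IsOfFinOrder (x * y) := by
  refine (isOfFinOrder_pow.1 ?_).resolve_right (FiniteIndex.index_ne_zero (H := center G))
  rw [mul_pow_index_of_le_center le_rfl]
  exact Commute.isOfFinOrder_mul (mem_center_iff.1 ((center G).pow_index_mem y) _)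
    hx.pow hy.pow

theorem finite_of_fg_of_isMulTorsion_of_finiteIndex_center [(center G).FiniteIndex] [Group.FG G]
    (hG : IsMulTorsion G) : Finite G :=
  have : Finite (center G) := CommGroup.finite_of_fg_isMulTorsion _ (hG.subgroup _)
  (finite_iff_finite_and_finiteIndex (center G)).2 ⟨‹_›, ‹_›⟩

theorem IsConjInvariant.finiteIndex_center_closure {X : Set G} (hX : IsConjInvariant X)
    (hfin : X.Finite) : (center (closure X)).FiniteIndex := by
  have := hX.finiteIndex_centralizer hfin
  refine finiteIndex_of_le (H := (centralizer X).subgroupOf (closure X)) fun c hc => ?_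
  rw [mem_subgroupOf, ← centralizer_closure] at hc
  exact mem_center_iff.2 fun g => Subtype.ext (hc g g.2)

theorem IsConjInvariant.finite_closure {X : Set G} (hX : IsConjInvariant X)
    (hfin : X.Finite) (htors : ∀ x ∈ X, IsOfFinOrder x) : Finite (closure X) := by
  have := hX.finiteIndex_center_closure hfin
  have : Finite X := hfin
  refine finite_of_fg_of_isMulTorsion_of_finiteIndex_center fun ⟨x, hx⟩ => ?_
  induction hx using closure_induction with
  | mem x hx => exact Submonoid.isOfFinOrder_coe.1 (htors x hx)
  | one => exact IsOfFinOrder.one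
  | mul x y _ _ hx hy => exact isOfFinOrder_mul_of_finiteIndex_center hx hy
  | inv x _ hx => exact hx.inv

/-- The set of commutators `⁅b, a⁆` with `b ∈ B` and `a ∈ A`; unlike for `⁅H, K⁆`, the arguments
are mere sets and no closure is taken. -/
def commutatorsOf (B A : Set G) : Set G :=
  Set.image2 (fun b a => ⁅b, a⁆) B A

theorem isConjInvariant_commutatorsOf {A B : Set G} (hB : IsConjInvariant B)
    (hA : IsConjInvariant A) : IsConjInvariant (commutatorsOf B A) := by
  rintro _ ⟨b, hb, a, ha, rfl⟩ g
  exact ⟨_, hB b hb g, _, hA a ha g, (conjugate_commutatorElement b a g).symm⟩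

theorem commutatorElement_eq_iff_commute_left {g h a : G} :
    ⁅g, a⁆ = ⁅h, a⁆ ↔ Commute (g⁻¹ * h) a := by
  rw [commutatorElement_def, commutatorElement_def, mul_left_inj, eq_comm, mul_inv_eq_iff_eq_mul,
    mul_assoc, mul_assoc, ← inv_mul_eq_iff_eq_mul, ← mul_assoc, commute_iff_eq]

theorem commutatorElement_eq_iff_commute_right {g a b : G} :
    ⁅g, a⁆ = ⁅g, b⁆ ↔ Commute g (a⁻¹ * b) := by
  rw [← inv_inj, commutatorElement_inv, commutatorElement_inv,
    commutatorElement_eq_iff_commute_left, Commute.symm_iff]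

theorem commutatorElement_congr_left {A : Set G} {g h a : G} (ha : a ∈ A)
    (hgh : (g : G ⧸ centralizer A) = h) : ⁅g, a⁆ = ⁅h, a⁆ :=
  commutatorElement_eq_iff_commute_left.2 (QuotientGroup.eq.1 hgh a ha).symm

theorem mk_center_eq_iff_forall_commutatorElement_eq {a b : G} :
    (a : G ⧸ center G) = b ↔ ∀ g : G, ⁅g, a⁆ = ⁅g, b⁆ := by
  simp only [commutatorElement_eq_iff_commute_right, QuotientGroup.eq, mem_center_iff,
    commute_iff_eq]

theorem commutatorElement_pow_left {c a : G} (h : Commute c ⁅c, a⁆) (n : ℕ) :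
    ⁅c ^ n, a⁆ = ⁅c, a⁆ ^ n := by
  induction n with
  | zero => simp only [pow_zero, commutatorElement_one_left]
  | succ n ih =>
    rw [pow_succ, commutatorElement_mul_left_eq_conj_mul, ih, (h.pow_left n).eq,
      mul_inv_cancel_right, ← pow_succ']

theorem finite_image_mk_center {A : Set G} [(centralizer A).FiniteIndex]
    (hA : (commutatorsOf Set.univ A).Finite) :
    ((QuotientGroup.mk : G → G ⧸ center G) '' A).Finite := by
  have : Finite (commutatorsOf Set.univ A) := hA
  let φ (a : A) (q : G ⧸ centralizer A) : commutatorsOf Set.univ A :=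
    ⟨⁅q.out, (a : G)⁆, q.out, Set.mem_univ _, a, a.2, rfl⟩
  rw [Set.image_eq_range]
  refine finite_range_of_factorsThrough (g := φ) fun a b hab => ?_
  refine mk_center_eq_iff_forall_commutatorElement_eq.2 fun g => ?_
  have hout : (g : G ⧸ centralizer A) = (g : G ⧸ centralizer A).out :=
    (QuotientGroup.out_eq' _).symm
  rw [commutatorElement_congr_left a.2 hout, commutatorElement_congr_left b.2 hout]
  exact congrArg Subtype.val (congrFun hab g)

theorem finite_commutatorsOf_univ {K : Subgroup G} [(centralizer (K : Set G)).FiniteIndex]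
    [(center G).IsFiniteRelIndex K] : (commutatorsOf Set.univ (K : Set G)).Finite := by
  let φ (p : G × K) : (G ⧸ centralizer (K : Set G)) × (K ⧸ (center G).subgroupOf K) := (p.1, p.2)
  refine (finite_range_of_factorsThrough (g := φ) (f := fun p => ⁅p.1, (p.2 : G)⁆) ?_).subset ?_
  · rintro ⟨g, k⟩ ⟨h, l⟩ hp
    obtain ⟨hg, hk⟩ := Prod.ext_iff.1 hp
    have hkl : ((k : G) : G ⧸ center G) = (l : G) :=
      QuotientGroup.eq.2 (mem_subgroupOf.1 (QuotientGroup.eq.1 hk))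
    exact (commutatorElement_congr_left k.2 hg).trans
      (mk_center_eq_iff_forall_commutatorElement_eq.1 hkl h)
  · rintro _ ⟨g, -, k, hk, rfl⟩
    exact ⟨(g, ⟨k, hk⟩), rfl⟩

theorem commutatorElement_pow_relIndex_center {K : Subgroup G} [K.Normal]
    [(center G).IsFiniteRelIndex K] (g : G) {k : G} (hk : k ∈ K) :
    ⁅g, k⁆ ^ (center G).relIndex K = 1 := by
  set N := (center G).relIndex K
  have hle : (center G).subgroupOf K ≤ center K := fun c hc =>
    mem_center_iff.2 fun x => Subtype.ext (mem_center_iff.1 hc x)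
  have hcentral : k ^ N ∈ center G := ((center G).subgroupOf K).pow_index_mem ⟨k, hk⟩
  have hmul : (g * k * g⁻¹ * k⁻¹) ^ N = (g * k * g⁻¹) ^ N * k⁻¹ ^ N :=
    congrArg Subtype.val (mul_pow_index_of_le_center hle
      ⟨g * k * g⁻¹, Normal.conj_mem ‹_› k hk g⟩ ⟨k⁻¹, inv_mem hk⟩)
  rw [commutatorElement_def, hmul, conj_pow, mem_center_iff.1 hcentral g, mul_inv_cancel_right,
    inv_pow, mul_inv_cancel]

theorem finite_commutator_top {K : Subgroup G} [K.Normal]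
    [(centralizer (K : Set G)).FiniteIndex] [(center G).IsFiniteRelIndex K] :
    Finite (⁅(⊤ : Subgroup G), K⁆ : Subgroup G) := by
  have hinv : IsConjInvariant (commutatorsOf Set.univ (K : Set G)) :=
    isConjInvariant_commutatorsOf isConjInvariant_univ (Normal.conj_mem ‹_›)
  refine hinv.finite_closure finite_commutatorsOf_univ ?_
  rintro _ ⟨g, -, k, hk, rfl⟩
  exact isOfFinOrder_iff_pow_eq_one.2
    ⟨_, Nat.pos_of_ne_zero relIndex_ne_zero, commutatorElement_pow_relIndex_center g hk⟩

theorem isOfFinOrder_commutatorElement_of_commute {a c : G}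
    (hfin : (commutatorsOf Set.univ {a}).Finite) (hc : Commute c ⁅c, a⁆) : IsOfFinOrder ⁅c, a⁆ := by
  refine finite_powers.1 (hfin.subset ?_)
  rintro _ ⟨n, rfl⟩
  exact ⟨c ^ n, Set.mem_univ _, a, rfl, commutatorElement_pow_left hc n⟩

theorem map_le_centralizer_image {G' : Type*} [Group G'] {f : G →* G'} {A : Set G}
    {H : Subgroup G} (h : ∀ x ∈ commutatorsOf H A, x ∈ f.ker) :
    H.map f ≤ centralizer (f '' A) := by
  rintro _ ⟨c, hc, rfl⟩ _ ⟨a, ha, rfl⟩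
  refine (commutatorElement_eq_one_iff_commute.1 ?_).symm
  rw [← map_commutatorElement]
  exact h _ ⟨c, hc, a, ha, rfl⟩

theorem IsConjInvariant.exists_finite_normal_finiteIndex_centralizer {A : Set G}
    (hA : IsConjInvariant A) (hfin : (commutatorsOf Set.univ A).Finite) :
    ∃ (T : Subgroup G) (_ : T.Normal), Finite T ∧
      (centralizer (QuotientGroup.mk' T '' A)).FiniteIndex := by
  have hV : IsConjInvariant (commutatorsOf Set.univ A) :=
    isConjInvariant_commutatorsOf isConjInvariant_univ hA
  let C := centralizer (commutatorsOf Set.univ A)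
  have : C.FiniteIndex := hV.finiteIndex_centralizer hfin
  have hX : IsConjInvariant (commutatorsOf C A) :=
    isConjInvariant_commutatorsOf hV.normal_centralizer.conj_mem hA
  have htors : ∀ x ∈ commutatorsOf C A, IsOfFinOrder x := by
    rintro _ ⟨c, hc, a, ha, rfl⟩
    refine isOfFinOrder_commutatorElement_of_commute ?_ (hc _ ⟨c, Set.mem_univ _, a, ha, rfl⟩).symm
    exact hfin.subset (Set.image2_subset_left (Set.singleton_subset_iff.2 ha))
  have hTn := hX.normal_closure
  have hT := hX.finite_closure (hfin.subset (Set.image2_subset_right (Set.subset_univ _))) htors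
  have := finiteIndex_map_of_surjective
    (QuotientGroup.mk'_surjective (closure (commutatorsOf C A))) C
  refine ⟨_, hTn, hT, finiteIndex_of_le (H := C.map (QuotientGroup.mk' _)) <|
    map_le_centralizer_image fun x hx => ?_⟩
  rw [QuotientGroup.ker_mk']
  exact subset_closure hx

end GroupTheory

section Words

open Subgroup
open scoped commutatorElement

variable {G G' : Type*} [Group G] [Group G'] {n : ℕ}

theorem map_freeGroup_lift {α : Type*} (f : G →* G') (g : α → G) (x : FreeGroup α) :
    f (FreeGroup.lift g x) = FreeGroup.lift (f ∘ g) x :=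
  FreeGroup.lift_unique (f.comp (FreeGroup.lift g)) fun _ => congrArg f FreeGroup.lift_apply_of

theorem image_wValues (w : FreeGroup (Fin n)) (f : G →* G') :
    f '' wValues w G = Set.range fun g : Fin n → G => FreeGroup.lift (f ∘ g) w := by
  rw [wValues, ← Set.range_comp]
  exact congrArg Set.range (funext fun g => map_freeGroup_lift f g w)

theorem image_wValues_subset (w : FreeGroup (Fin n)) (f : G →* G') :
    f '' wValues w G ⊆ wValues w G' := by
  rw [image_wValues]
  rintro _ ⟨g, rfl⟩
  exact ⟨f ∘ g, rfl⟩

theorem image_wValues_of_surjective (w : FreeGroup (Fin n)) {f : G →* G'}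
    (hf : Function.Surjective f) : f '' wValues w G = wValues w G' := by
  rw [image_wValues]
  exact hf.comp_left.range_comp fun g : Fin n → G' => FreeGroup.lift g w

theorem isConjInvariant_wValues (w : FreeGroup (Fin n)) : IsConjInvariant (wValues w G) :=
  fun x hx g => image_wValues_subset w (MulAut.conj g).toMonoidHom ⟨x, hx, rfl⟩

instance normal_verbalSubgroup (w : FreeGroup (Fin n)) : (verbalSubgroup w G).Normal :=
  (isConjInvariant_wValues w).normal_closure

theorem map_pcomm (f : G →* G') (a b : G) : f (pcomm a b) = pcomm (f a) (f b) := by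
  simp only [pcomm, map_mul, map_inv]

theorem lift_commWord_one (w : FreeGroup (Fin n)) (g : Fin (n + 1) → G) :
    FreeGroup.lift g (commWord 1 w) =
      pcomm (FreeGroup.lift (g ∘ Fin.castSucc) w) (g (Fin.last n)) := by
  have hextend : FreeGroup.lift g (extendWord 1 w) = FreeGroup.lift (g ∘ Fin.castSucc) w :=
    FreeGroup.lift_unique ((FreeGroup.lift g).comp (FreeGroup.map (Fin.castAdd 1)))
      fun _ => FreeGroup.lift_apply_of
  have hcomm : commWord 1 w = pcomm (extendWord 1 w) (FreeGroup.of (Fin.last n)) := rfl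
  rw [hcomm, map_pcomm, hextend, FreeGroup.lift_apply_of]

-- `pcomm a b` is `a⁻¹ * b⁻¹ * a * b` while `⁅a, b⁆` is `a * b * a⁻¹ * b⁻¹`. When `b` ranges over
-- the whole group, `pcomm a b` and `⁅b, a⁆` nevertheless take the same values.
theorem pcomm_eq_commutatorElement (a b : G) : pcomm a b = ⁅a⁻¹ * b⁻¹ * a, a⁆ := by
  rw [pcomm, commutatorElement_def]
  group

theorem commutatorElement_eq_pcomm (b a : G) : ⁅b, a⁆ = pcomm a (a * b⁻¹ * a⁻¹) := by
  rw [pcomm, commutatorElement_def]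
  group

theorem wValues_commWord_one (w : FreeGroup (Fin n)) :
    wValues (commWord 1 w) G = commutatorsOf Set.univ (wValues w G) := by
  ext x
  constructor
  · rintro ⟨g, rfl⟩
    exact ⟨_, Set.mem_univ _, _, ⟨g ∘ Fin.castSucc, rfl⟩,
      ((lift_commWord_one w g).trans (pcomm_eq_commutatorElement _ _)).symm⟩
  · rintro ⟨b, -, _, ⟨g, rfl⟩, rfl⟩
    let a := FreeGroup.lift g w
    refine ⟨Fin.snoc g (a * b⁻¹ * a⁻¹), (lift_commWord_one w _).trans ?_⟩
    rw [Fin.snoc_last, Fin.snoc_comp_castSucc, ← commutatorElement_eq_pcomm]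

theorem verbalSubgroup_commWord_one_le (w : FreeGroup (Fin n)) :
    verbalSubgroup (commWord 1 w) G ≤ ⁅verbalSubgroup w G, (⊤ : Subgroup G)⁆ := by
  rw [verbalSubgroup, closure_le, wValues_commWord_one, commutator_comm]
  rintro _ ⟨b, -, a, ha, rfl⟩
  exact commutator_mem_commutator (mem_top b) (subset_closure ha)

instance normal_iterCommSub (H : Subgroup G) [H.Normal] (j : ℕ) : (iterCommSub G H j).Normal := by
  induction j with
  | zero => assumption
  | succ j ih => exact commutator_normal _ _

theorem iterCommSub_mono {H K : Subgroup G} (h : H ≤ K) (j : ℕ) :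
    iterCommSub G H j ≤ iterCommSub G K j := by
  induction j with
  | zero => exact h
  | succ j ih => exact commutator_mono ih le_rfl

theorem iterCommSub_le (H : Subgroup G) [H.Normal] (j : ℕ) : iterCommSub G H j ≤ H := by
  induction j with
  | zero => exact le_rfl
  | succ j ih => exact (commutator_le_left _ _).trans ih

theorem iterCommSub_commutator_top (H : Subgroup G) (j : ℕ) :
    iterCommSub G ⁅H, (⊤ : Subgroup G)⁆ j = ⁅iterCommSub G H j, (⊤ : Subgroup G)⁆ := by
  induction j with
  | zero => rfl
  | succ j ih => exact congrArg (⁅·, (⊤ : Subgroup G)⁆) ih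

theorem iterCommSub_commWord_one_le (w : FreeGroup (Fin n)) (j : ℕ) :
    iterCommSub G (verbalSubgroup (commWord 1 w) G) j ≤
      ⁅(⊤ : Subgroup G), iterCommSub G (verbalSubgroup w G) j⁆ := by
  rw [commutator_comm, ← iterCommSub_commutator_top]
  exact iterCommSub_mono (verbalSubgroup_commWord_one_le w) j

theorem map_iterCommSub_verbalSubgroup_le (w : FreeGroup (Fin n)) (f : G →* G') (j : ℕ) :
    (iterCommSub G (verbalSubgroup w G) j).map f ≤ iterCommSub G' (verbalSubgroup w G') j := by
  induction j with
  | zero => exact (f.map_closure _).trans_le (closure_mono (image_wValues_subset w f))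
  | succ j ih => exact (map_commutator _ _ f).trans_le (commutator_mono ih le_top)

theorem map_iterCommSub_verbalSubgroup_of_surjective (w : FreeGroup (Fin n)) {f : G →* G'}
    (hf : Function.Surjective f) (j : ℕ) :
    (iterCommSub G (verbalSubgroup w G) j).map f = iterCommSub G' (verbalSubgroup w G') j := by
  induction j with
  | zero =>
    exact (f.map_closure _).trans (congrArg Subgroup.closure (image_wValues_of_surjective w hf))
  | succ j ih =>
    rw [iterCommSub, map_commutator, ih, map_top_of_surjective f hf, iterCommSub]

end Words

section InnerIterComm

open Subgroup
open scoped commutatorElement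

variable {G : Type*} [Group G] {n : ℕ}

/-- The subgroup `[w(H), H, …, H]` of `G` (with `j` copies of `H`) for a subgroup `H` of `G`, used
to approximate `[w(G), G, …, G]` from inside. -/
def innerIterComm (w : FreeGroup (Fin n)) (j : ℕ) (H : Subgroup G) : Subgroup G :=
  (iterCommSub H (verbalSubgroup w H) j).map H.subtype

theorem innerIterComm_mono (w : FreeGroup (Fin n)) (j : ℕ) :
    Monotone (innerIterComm (G := G) w j) := by
  intro H K h
  have hsubtype : H.subtype = K.subtype.comp (inclusion h) := rfl
  rw [innerIterComm, hsubtype, ← map_map]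
  exact map_mono (map_iterCommSub_verbalSubgroup_le w (inclusion h) j)

theorem lift_mem_innerIterComm_zero (w : FreeGroup (Fin n)) {H : Subgroup G} {g : Fin n → G}
    (hg : ∀ i, g i ∈ H) :
    FreeGroup.lift g w ∈ innerIterComm w 0 H :=
  ⟨FreeGroup.lift (fun i => ⟨g i, hg i⟩) w, subset_closure ⟨_, rfl⟩,
    map_freeGroup_lift H.subtype _ w⟩

theorem commutatorElement_mem_innerIterComm_succ {w : FreeGroup (Fin n)} {j : ℕ} {H : Subgroup G}
    {x g : G} (hx : x ∈ innerIterComm w j H) (hg : g ∈ H) :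
    ⁅x, g⁆ ∈ innerIterComm w (j + 1) H := by
  obtain ⟨y, hy, rfl⟩ := hx
  exact ⟨⁅y, ⟨g, hg⟩⁆, commutator_mem_commutator hy (mem_top _), rfl⟩

theorem mem_iSup_innerIterComm {w : FreeGroup (Fin n)} {j : ℕ} {x : G} :
    x ∈ ⨆ S : Finset G, innerIterComm w j (closure (S : Set G)) ↔
      ∃ S : Finset G, x ∈ innerIterComm w j (closure (S : Set G)) := by
  classical
  refine mem_iSup_of_directed (Monotone.directed_le fun S S' h => ?_)
  exact innerIterComm_mono w j (closure_mono (Finset.coe_subset.2 h))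

theorem iterCommSub_le_iSup_innerIterComm (w : FreeGroup (Fin n)) (j : ℕ) :
    iterCommSub G (verbalSubgroup w G) j ≤
      ⨆ S : Finset G, innerIterComm w j (closure (S : Set G)) := by
  classical
  induction j with
  | zero =>
    refine (closure_le _).2 ?_
    rintro _ ⟨g, rfl⟩
    exact mem_iSup_innerIterComm.2 ⟨Finset.univ.image g, lift_mem_innerIterComm_zero w fun i =>
      subset_closure (Finset.mem_image_of_mem g (Finset.mem_univ i))⟩
  | succ j ih =>
    refine commutator_le.2 fun x hx g _ => ?_
    obtain ⟨S, hS⟩ := mem_iSup_innerIterComm.1 (ih hx)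
    have hle : closure (S : Set G) ≤ closure ((insert g S : Finset G) : Set G) :=
      closure_mono (Finset.coe_subset.2 (Finset.subset_insert g S))
    exact mem_iSup_innerIterComm.2 ⟨insert g S, commutatorElement_mem_innerIterComm_succ
      (innerIterComm_mono w j hle hS) (subset_closure (Finset.mem_insert_self g S))⟩

theorem countable_closure {S : Set G} (hS : S.Countable) : Countable (closure S) := by
  have : Countable S := hS
  rw [← Subtype.range_coe (s := S), ← FreeGroup.range_lift_eq_closure]
  exact (MonoidHom.rangeRestrict_surjective _).countable

theorem exists_countable_subset_innerIterComm (w : FreeGroup (Fin n)) (j : ℕ) {X : Set G}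
    (hX : X ⊆ iterCommSub G (verbalSubgroup w G) j) (hcount : X.Countable) :
    ∃ L : Subgroup G, Countable L ∧ X ⊆ innerIterComm w j L := by
  have hlocal (x : X) : ∃ S : Finset G, (x : G) ∈ innerIterComm w j (closure (S : Set G)) :=
    mem_iSup_innerIterComm.1 (iterCommSub_le_iSup_innerIterComm w j (hX x.2))
  choose S hS using hlocal
  have : Countable X := hcount
  refine ⟨Subgroup.closure (⋃ x, (S x : Set G)), countable_closure
    (Set.countable_iUnion fun x => (S x).countable_toSet), fun x hx => ?_⟩
  have hle : closure (S ⟨x, hx⟩ : Set G) ≤ Subgroup.closure (⋃ x, (S x : Set G)) :=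
    closure_mono (Set.subset_iUnion (fun x => (S x : Set G)) ⟨x, hx⟩)
  exact innerIterComm_mono w j hle (hS ⟨x, hx⟩)

end InnerIterComm

section Concise

open Subgroup
open scoped commutatorElement

universe u v

theorem IsFracConcise.finite_iterCommSub_commWord_one_of_finiteIndex_centralizer {n m : ℕ}
    {w : FreeGroup (Fin n)} (hw : IsFracConcise.{u} w (m + 1)) {G : Type u} [Group G]
    [(centralizer (wValues w G)).FiniteIndex] (hfin : (wValues (commWord 1 w) G).Finite) :
    Finite (iterCommSub G (verbalSubgroup (commWord 1 w) G) m) := by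
  let K := iterCommSub G (verbalSubgroup w G) m
  have hquot : (wValues w (G ⧸ center G)).Finite := by
    rw [← image_wValues_of_surjective w (QuotientGroup.mk'_surjective (center G))]
    exact finite_image_mk_center (by rwa [← wValues_commWord_one])
  have : Finite (K.map (QuotientGroup.mk' (center G))) := by
    rw [map_iterCommSub_verbalSubgroup_of_surjective w (QuotientGroup.mk'_surjective _)]
    exact hw _ hquot
  have : (center G).IsFiniteRelIndex K := by
    refine ⟨?_⟩
    rw [← QuotientGroup.ker_mk' (center G), relIndex_ker]
    exact Nat.card_pos.ne'
  have : (centralizer (K : Set G)).FiniteIndex := by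
    refine finiteIndex_of_le (H := centralizer (wValues w G)) ?_
    rw [← centralizer_closure]
    exact centralizer_le (iterCommSub_le (verbalSubgroup w G) m)
  have := finite_commutator_top (K := K)
  exact Finite.of_injective _ (inclusion_injective (iterCommSub_commWord_one_le w m))

theorem IsFracConcise.commWord_one {n m : ℕ} {w : FreeGroup (Fin n)}
    (hw : IsFracConcise.{u} w (m + 1)) : IsFracConcise.{u} (commWord 1 w) (m + 1) := by
  intro G _ hfin
  obtain ⟨T, hTn, hT, hcent⟩ :=
    (isConjInvariant_wValues (G := G) w).exists_finite_normal_finiteIndex_centralizer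
      (by rwa [← wValues_commWord_one])
  have hsurj := QuotientGroup.mk'_surjective T
  rw [image_wValues_of_surjective w hsurj] at hcent
  have : Finite
      ((iterCommSub G (verbalSubgroup (commWord 1 w) G) m).map (QuotientGroup.mk' T)) := by
    rw [map_iterCommSub_verbalSubgroup_of_surjective _ hsurj]
    exact hw.finite_iterCommSub_commWord_one_of_finiteIndex_centralizer
      (image_wValues_of_surjective (commWord 1 w) hsurj ▸ hfin.image _)
  have : Finite (QuotientGroup.mk' T).ker := by rwa [QuotientGroup.ker_mk']
  have : Finite (iterCommSub G (verbalSubgroup (commWord 1 w) G) m) :=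
    finite_of_finite_map (f := QuotientGroup.mk' T)
  exact this

theorem IsFracConcise.finite_iterCommSub_of_small {n k : ℕ} {w : FreeGroup (Fin n)}
    (hw : IsFracConcise.{u} w k) {G : Type v} [Group G] [Small.{u} G]
    (hfin : (wValues w G).Finite) :
    Finite (iterCommSub G (verbalSubgroup w G) (k - 1)) := by
  let e : Shrink.{u} G ≃* G := Shrink.mulEquiv
  have hshrink := hw (Shrink.{u} G)
    (image_wValues_of_surjective w (f := e.symm.toMonoidHom) e.symm.surjective ▸ hfin.image _)
  rw [← map_iterCommSub_verbalSubgroup_of_surjective w (f := e.toMonoidHom) e.surjective]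
  exact hshrink.image e

theorem IsFracConcise.universe_change {n k : ℕ} {w : FreeGroup (Fin n)}
    (hw : IsFracConcise.{u} w k) : IsFracConcise.{v} w k := by
  intro G _ hfin
  by_contra hinf
  obtain ⟨X, hX, hcount, hXinf⟩ := Set.Infinite.exists_subset_countable_infinite hinf
  obtain ⟨L, hL, hXL⟩ := exists_countable_subset_innerIterComm w (k - 1) hX hcount
  have hfinL : (wValues w L).Finite :=
    (hfin.subset (image_wValues_subset w L.subtype)).of_finite_image L.subtype_injective.injOn
  have := Countable.toSmall.{u} L
  have := hw.finite_iterCommSub_of_small hfinL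
  exact hXinf (((Set.toFinite (iterCommSub L (verbalSubgroup w L) (k - 1) : Set L)).image
    L.subtype).subset hXL)

end Concise

/-- if `w` is `(1/(m+1))`-concise, then so is `v = [w, x_{n+1}]`. -/
theorem statement_8 {n : ℕ} (m : ℕ) (w : FreeGroup (Fin n))
    (hw : IsFracConcise w (m + 1)) :
    IsFracConcise (commWord 1 w) (m + 1) := by
  exact hw.universe_change.commWord_one
end

section
/- Let G be a group and let y, b ∈ G be such that b^2 = 1 and [y, y^b] = 1 (i.e., y commutes with b^{-1}yb). Then for every m ≥ 0 the iterated commutator [y, b, b, ..., b] with b repeated m+1 times equals (y^{(-1)^m · 2^m})^b · y^{(-1)^{m+1} · 2^m}. -/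
/-!
Put `z = b⁻¹ y b`. If `b ^ 2` commutes with `y`, then conjugation by `b` swaps `y` and `z`, hence
inverts `[y, b] = y⁻¹ z`. An element `u` inverted by `b` satisfies `[u, b] = u⁻¹ u⁻¹ = u ^ (-2)`,
so each further commutator with `b` raises to the power `-2`, giving `[y, b] ^ ((-2) ^ m)` after
`m` of them. As `y` and `z` commute, a power of `y⁻¹ z = z y⁻¹` splits into powers of `z` and `y`.
-/

section Commutators

variable {G : Type*} [Group G] {y b u : G}

lemma pcomm_eq_inv_mul_conj (y b : G) : pcomm y b = y⁻¹ * (b⁻¹ * y * b) := by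
  simp only [pcomm, mul_assoc]

lemma pcomm_eq_one_iff_commute : pcomm y b = 1 ↔ Commute y b := by
  rw [pcomm, mul_assoc, ← mul_inv_rev, inv_mul_eq_one, eq_comm, commute_iff_eq]

lemma iterPcomm_succ_eq_iterPcomm_pcomm (y b : G) (k : ℕ) :
    iterPcomm y b (k + 1) = iterPcomm (pcomm y b) b k := by
  induction k with
  | zero => rfl
  | succ k ih => exact congrArg (pcomm · b) ih

lemma pcomm_of_semiconjBy_inv (h : SemiconjBy b u u⁻¹) : pcomm u b = u ^ (-2 : ℤ) := by
  have conj_eq_inv : b⁻¹ * u * b = u⁻¹ := by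
    rw [mul_assoc, inv_mul_eq_iff_eq_mul, h.inv_right.eq, inv_inv]
  rw [pcomm_eq_inv_mul_conj, conj_eq_inv, zpow_neg, zpow_two, mul_inv_rev]

lemma iterPcomm_of_semiconjBy_inv (h : SemiconjBy b u u⁻¹) (k : ℕ) :
    iterPcomm u b k = u ^ ((-2 : ℤ) ^ k) := by
  induction k with
  | zero => rw [iterPcomm, pow_zero, zpow_one]
  | succ k ih =>
    have inverted : SemiconjBy b (u ^ ((-2 : ℤ) ^ k)) (u ^ ((-2 : ℤ) ^ k))⁻¹ := by
      simpa only [inv_zpow] using h.zpow_right ((-2) ^ k)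
    rw [iterPcomm, ih, pcomm_of_semiconjBy_inv inverted, ← zpow_mul, pow_succ]

lemma semiconjBy_pcomm_inv_of_commute_sq (hb : Commute (b ^ 2) y) :
    SemiconjBy b (pcomm y b) (pcomm y b)⁻¹ := by
  have conj_to_self : SemiconjBy b (b⁻¹ * y * b) y := by
    simp only [SemiconjBy, mul_assoc, mul_inv_cancel_left]
  have self_to_conj : SemiconjBy b y (b⁻¹ * y * b) := by
    rw [SemiconjBy, mul_assoc, mul_assoc, eq_inv_mul_iff_mul_eq, ← mul_assoc, ← sq]
    exact hb.eq
  rw [pcomm_eq_inv_mul_conj, mul_inv_rev, inv_inv]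
  exact self_to_conj.inv_right.mul_right conj_to_self

lemma pcomm_zpow_of_commute_conj (hyb : Commute y (b⁻¹ * y * b)) (n : ℤ) :
    pcomm y b ^ n = b⁻¹ * y ^ n * b * y ^ (-n) := by
  have conj_zpow_eq : (b⁻¹ * y * b) ^ n = b⁻¹ * y ^ n * b := by
    simpa only [inv_inv] using conj_zpow (i := n) (a := b⁻¹) (b := y)
  rw [pcomm_eq_inv_mul_conj, hyb.inv_left.eq, hyb.symm.inv_right.mul_zpow, conj_zpow_eq,
    inv_zpow']

theorem statement_9_general (y b : G) (hb : Commute (b ^ 2) y)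
    (hyb : pcomm y (b⁻¹ * y * b) = 1) (m : ℕ) :
    iterPcomm y b (m + 1) =
      b⁻¹ * y ^ ((-1 : ℤ) ^ m * 2 ^ m) * b * y ^ ((-1 : ℤ) ^ (m + 1) * 2 ^ m) := by
  have neg_exponent : (-1 : ℤ) ^ (m + 1) * 2 ^ m = -((-1) ^ m * 2 ^ m) := by ring
  have neg_two_pow : (-2 : ℤ) ^ m = (-1) ^ m * 2 ^ m := neg_pow 2 m
  rw [iterPcomm_succ_eq_iterPcomm_pcomm,
    iterPcomm_of_semiconjBy_inv (semiconjBy_pcomm_inv_of_commute_sq hb),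
    pcomm_zpow_of_commute_conj (pcomm_eq_one_iff_commute.mp hyb), neg_two_pow,
    neg_exponent]

end Commutators

/-- if `b^2 = 1` and `[y, y^b] = 1`, then for every `m ≥ 0`,
`[y, b, ..., b]` (`b` repeated `m + 1` times) equals
`(y^{(-1)^m 2^m})^b ⬝ y^{(-1)^{m+1} 2^m}`. -/
theorem statement_9 {G : Type*} [Group G] (y b : G) (hb : b ^ 2 = 1)
    (hyb : pcomm y (b⁻¹ * y * b) = 1) (m : ℕ) :
    iterPcomm y b (m + 1) =
      b⁻¹ * y ^ ((-1 : ℤ) ^ m * 2 ^ m) * b * y ^ ((-1 : ℤ) ^ (m + 1) * 2 ^ m) :=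
  statement_9_general y b (hb ▸ Commute.one_left y) hyb m
end
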